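/- Let 1 < p < q < p*. For every open bounded convex set Ω ⊂ ℝ^N and every open ball B ⊂ ℝ^N one has the strict inequality μ_{p,q}(Ω) < λ_p(B) · |Ω|^{1 − p/q} · (diam(B)/diam(Ω))^p. -/

import Mathlib

open MeasureTheory Metric Set Real

noncomputable section

/-- The Rayleigh quotient `(∫_Ω |∇v|^p) / (∫_Ω |v|^q)^(p/q)`, where the gradient is
understood as the (a.e. defined) Fréchet derivative. -/
def rayleighQuot {N : ℕ} (p q : ℝ) (Ω : Set (EuclideanSpace ℝ (Fin N)))
    (v : EuclideanSpace ℝ (Fin N) → ℝ) : ℝ :=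
  (∫ x in Ω, ‖fderiv ℝ v x‖ ^ p) / (∫ x in Ω, |v x| ^ q) ^ (p / q)

/-- The first (generalized) Dirichlet eigenvalue `λ_{p,q}(Ω)`: infimum of the Rayleigh
quotient over nontrivial smooth functions compactly supported in `Ω`. -/
def lambdaPQ {N : ℕ} (p q : ℝ) (Ω : Set (EuclideanSpace ℝ (Fin N))) : ℝ :=
  sInf { R : ℝ | ∃ v : EuclideanSpace ℝ (Fin N) → ℝ,
    ContDiff ℝ (⊤ : ℕ∞) v ∧ HasCompactSupport v ∧ tsupport v ⊆ Ω ∧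
    (∃ x ∈ Ω, v x ≠ 0) ∧ R = rayleighQuot p q Ω v }

/-- The first nontrivial (generalized) Neumann eigenvalue `μ_{p,q}(Ω)`: infimum of the
Rayleigh quotient over nontrivial Lipschitz functions on the closure of `Ω` satisfying
the constraint `∫_Ω |v|^(q-2) v = 0`. -/
def muPQ {N : ℕ} (p q : ℝ) (Ω : Set (EuclideanSpace ℝ (Fin N))) : ℝ :=
  sInf { R : ℝ | ∃ v : EuclideanSpace ℝ (Fin N) → ℝ, ∃ K : NNReal,
    LipschitzOnWith K v (closure Ω) ∧ (∃ x ∈ Ω, v x ≠ 0) ∧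
    (∫ x in Ω, |v x| ^ (q - 2) * v x) = 0 ∧ R = rayleighQuot p q Ω v }

/-- `q` is below the critical Sobolev exponent `p* = Np/(N-p)` (with `p* = ∞` if `p ≥ N`). -/
def ltCritical (N : ℕ) (p q : ℝ) : Prop := p < N → q < N * p / (N - p)

end

/-!
Take `x₀` and `x₁` in the closure of `Ω` at distance `d = diam Ω`. A near-optimal Dirichlet function
of a ball of radius `d / 2` has a good ray in polar coordinates: its restriction `φ` to that ray has
weighted `p`-energy less than `Λ` times its weighted `p`-mass, with `Λ` close to `λ_p`. Freezing `φ`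
below a point chosen as in the rising sun lemma gives a radial profile for which the energy is at
most `Λ` times the mass on *every* centred ball. By integration along rays the same then holds on
every domain star-shaped with respect to the centre, in particular on `Ω` for the two copies of the
profile centred at `x₀` and `x₁`. These have disjoint supports, so a linear combination meets the
constraint `∫_Ω |v|^(q-2) v = 0`, and Hölder's inequality on the supports gives
`μ_{p,q}(Ω) ≤ λ_p(B_{d/2}) |Ω ∩ (B_{d/2}(x₀) ∪ B_{d/2}(x₁))|^(1 - p/q)`. In dimension at least two
the two balls do not cover `Ω`, which makes the final inequality strict.
-/

open scoped ENNReal NNReal Topology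

section PowerIntegrals

variable {α F : Type*} {m : MeasurableSpace α} {μ : Measure α} [NormedAddCommGroup F]
  {f : α → F} {p q : ℝ}

theorem lintegral_enorm_rpow_le_rpow_mul_measure_univ (hp : 0 < p) (hpq : p ≤ q)
    (hf : AEStronglyMeasurable f μ) :
    ∫⁻ x, ‖f x‖ₑ ^ p ∂μ ≤ (∫⁻ x, ‖f x‖ₑ ^ q ∂μ) ^ (p / q) * μ univ ^ (1 - p / q) := by
  have hq : 0 < q := hp.trans_le hpq
  rw [lintegral_rpow_enorm_eq_rpow_eLpNorm' hp, lintegral_rpow_enorm_eq_rpow_eLpNorm' hq]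
  calc eLpNorm' f p μ ^ p
      ≤ (eLpNorm' f q μ * μ univ ^ (1 / p - 1 / q)) ^ p := by
        gcongr
        exact eLpNorm'_le_eLpNorm'_mul_rpow_measure_univ hp hpq hf
    _ = (eLpNorm' f q μ ^ q) ^ (p / q) * μ univ ^ (1 - p / q) := by
        rw [ENNReal.mul_rpow_of_nonneg _ _ hp.le, ← ENNReal.rpow_mul, ← ENNReal.rpow_mul]
        congr 2 <;> field_simp

theorem lintegral_enorm_rpow_lt_top_of_hasCompactSupport [TopologicalSpace α]
    [OpensMeasurableSpace α] [IsFiniteMeasureOnCompacts μ] (hp : 0 < p) (hf : Continuous f)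
    (hcs : HasCompactSupport f) : ∫⁻ x, ‖f x‖ₑ ^ p ∂μ < ∞ := by
  have hmem : MemLp f (ENNReal.ofReal p) μ := hf.memLp_of_hasCompactSupport hcs
  simpa [hp.le] using lintegral_rpow_enorm_lt_top_of_eLpNorm_lt_top (by simpa using hp)
    ENNReal.ofReal_ne_top hmem.eLpNorm_lt_top

theorem integral_norm_rpow_eq_toReal_lintegral (hp : 0 ≤ p) (hf : AEStronglyMeasurable f μ) :
    ∫ x, ‖f x‖ ^ p ∂μ = (∫⁻ x, ‖f x‖ₑ ^ p ∂μ).toReal := by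
  rw [integral_eq_lintegral_of_nonneg_ae (.of_forall fun x => by positivity)
    (hf.norm.aemeasurable.pow_const p).aestronglyMeasurable]
  simp only [← ENNReal.ofReal_rpow_of_nonneg (norm_nonneg _) hp, ofReal_norm]

end PowerIntegrals

section RayleighQuotient

variable {N : ℕ} {p q : ℝ} {Ω : Set (EuclideanSpace ℝ (Fin N))}
  {v : EuclideanSpace ℝ (Fin N) → ℝ}

theorem rayleighQuot_nonneg (p q : ℝ) (Ω : Set (EuclideanSpace ℝ (Fin N)))
    (v : EuclideanSpace ℝ (Fin N) → ℝ) : 0 ≤ rayleighQuot p q Ω v := by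
  unfold rayleighQuot
  positivity

theorem rayleighQuot_eq_toReal (hp : 0 ≤ p) (hq : 0 ≤ q) (hv : Measurable v) :
    rayleighQuot p q Ω v = ((∫⁻ x in Ω, ‖fderiv ℝ v x‖ₑ ^ p) /
      (∫⁻ x in Ω, ‖v x‖ₑ ^ q) ^ (p / q)).toReal := by
  simp only [rayleighQuot, ← Real.norm_eq_abs]
  rw [integral_norm_rpow_eq_toReal_lintegral hp
      (measurable_fderiv ℝ v).aestronglyMeasurable,
    integral_norm_rpow_eq_toReal_lintegral hq hv.aestronglyMeasurable,
    ENNReal.toReal_div, ENNReal.toReal_rpow]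

theorem rayleighQuot_le_toReal {C : ℝ≥0∞} (hC : C ≠ ∞) (hp : 0 ≤ p) (hq : 0 ≤ q)
    (hv : Measurable v)
    (h : ∫⁻ x in Ω, ‖fderiv ℝ v x‖ₑ ^ p ≤ C * (∫⁻ x in Ω, ‖v x‖ₑ ^ q) ^ (p / q)) :
    rayleighQuot p q Ω v ≤ C.toReal := by
  rw [rayleighQuot_eq_toReal hp hq hv]
  exact ENNReal.toReal_mono hC (ENNReal.div_le_of_le_mul h)

end RayleighQuotient

section Poincare

variable {E F : Type*} [NormedAddCommGroup E] [NormedSpace ℝ E] [NormedAddCommGroup F]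
  [NormedSpace ℝ F] {v : E → F} {p r : ℝ} {c e : E}

theorem enorm_le_lintegral_enorm_fderiv (hv : ContDiff ℝ 1 v)
    (hsupp : Function.support v ⊆ ball c r) (he : ‖e‖ = 1) (x : E) :
    ‖v x‖ₑ ≤ ∫⁻ t in Icc 0 (2 * r), ‖fderiv ℝ v (x - t • e)‖ₑ := by
  by_cases hx : v x = 0
  · simp [hx]
  have hxc : dist x c < r := hsupp hx
  have hr : 0 ≤ 2 * r := by linarith [dist_nonneg (x := x) (y := c)]
  have hend : v (x - (2 * r) • e) = 0 := by
    by_contra h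
    have hyc : dist (x - (2 * r) • e) c < r := hsupp h
    have hdist : dist x (x - (2 * r) • e) = 2 * r := by
      rw [dist_self_sub_right, norm_smul, he, mul_one, Real.norm_of_nonneg hr]
    linarith [dist_triangle_right x (x - (2 * r) • e) c]
  have hderiv (t : ℝ) :
      HasDerivAt (fun t : ℝ => v (x - t • e)) (fderiv ℝ v (x - t • e) (-e)) t := by
    have hline : HasDerivAt (fun t : ℝ => x - t • e) (-e) t := by
      simpa using ((hasDerivAt_id t).smul_const e).const_sub x
    exact ((hv.differentiable one_ne_zero _).hasFDerivAt).comp_hasDerivAt t hline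
  have hline : ContDiff ℝ 1 fun t : ℝ => v (x - t • e) := by fun_prop
  calc ‖v x‖ₑ = ‖v (x - (2 * r) • e) - v (x - (0 : ℝ) • e)‖ₑ := by simp [hend]
    _ ≤ ∫⁻ t in Icc 0 (2 * r), ‖deriv (fun t : ℝ => v (x - t • e)) t‖ₑ :=
        enorm_sub_le_lintegral_deriv_of_contDiffOn_Icc hline.contDiffOn hr
    _ ≤ ∫⁻ t in Icc 0 (2 * r), ‖fderiv ℝ v (x - t • e)‖ₑ := by
        refine lintegral_mono fun t => ?_
        rw [(hderiv t).deriv, enorm_le_iff_norm_le]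
        simpa [he] using (fderiv ℝ v (x - t • e)).le_opNorm (-e)

variable [FiniteDimensional ℝ E] [Nontrivial E] [MeasurableSpace E] [BorelSpace E]
  (μ : Measure E) [μ.IsAddHaarMeasure]

theorem lintegral_enorm_rpow_le_mul_lintegral_enorm_fderiv_rpow (hp : 1 ≤ p)
    (hv : ContDiff ℝ 1 v) (hsupp : Function.support v ⊆ ball c r) :
    ∫⁻ x, ‖v x‖ₑ ^ p ∂μ ≤ ENNReal.ofReal (2 * r) ^ p * ∫⁻ x, ‖fderiv ℝ v x‖ₑ ^ p ∂μ := by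
  obtain ⟨e, he⟩ := exists_norm_eq E zero_le_one
  have hp0 : 0 < p := one_pos.trans_le hp
  have hcont : Continuous (fderiv ℝ v) := hv.continuous_fderiv one_ne_zero
  have hpoint (x : E) : ‖v x‖ₑ ^ p ≤ (∫⁻ t in Icc 0 (2 * r), ‖fderiv ℝ v (x - t • e)‖ₑ ^ p) *
      ENNReal.ofReal (2 * r) ^ (p - 1) := by
    have hmeas : AEStronglyMeasurable (fun t : ℝ => fderiv ℝ v (x - t • e))
        (volume.restrict (Icc 0 (2 * r))) :=
      (hcont.comp (by fun_prop)).aestronglyMeasurable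
    have hjensen := lintegral_enorm_rpow_le_rpow_mul_measure_univ one_pos hp hmeas
    simp only [ENNReal.rpow_one, Measure.restrict_apply_univ, Real.volume_Icc, sub_zero] at hjensen
    calc ‖v x‖ₑ ^ p ≤ ((∫⁻ t in Icc 0 (2 * r), ‖fderiv ℝ v (x - t • e)‖ₑ ^ p) ^ (1 / p) *
          ENNReal.ofReal (2 * r) ^ (1 - 1 / p)) ^ p := by
          gcongr
          exact (enorm_le_lintegral_enorm_fderiv hv hsupp he x).trans hjensen
      _ = _ := by
          rw [ENNReal.mul_rpow_of_nonneg _ _ hp0.le, ← ENNReal.rpow_mul, ← ENNReal.rpow_mul,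
            one_div_mul_cancel hp0.ne', ENNReal.rpow_one, sub_mul, one_mul,
            one_div_mul_cancel hp0.ne']
  calc ∫⁻ x, ‖v x‖ₑ ^ p ∂μ
      ≤ ∫⁻ x, (∫⁻ t in Icc 0 (2 * r), ‖fderiv ℝ v (x - t • e)‖ₑ ^ p) *
          ENNReal.ofReal (2 * r) ^ (p - 1) ∂μ := lintegral_mono hpoint
    _ = (∫⁻ t in Icc 0 (2 * r), ∫⁻ x, ‖fderiv ℝ v (x - t • e)‖ₑ ^ p ∂μ) *
          ENNReal.ofReal (2 * r) ^ (p - 1) := by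
        rw [lintegral_mul_const' _ _ (ENNReal.rpow_ne_top_of_nonneg (by linarith)
          ENNReal.ofReal_ne_top), lintegral_lintegral_swap]
        fun_prop
    _ = _ := by
        simp only [lintegral_sub_right_eq_self (fun x => ‖fderiv ℝ v x‖ₑ ^ p),
          lintegral_const, Measure.restrict_apply_univ, Real.volume_Icc, sub_zero]
        rw [mul_assoc, mul_comm, mul_comm (ENNReal.ofReal _)]
        nth_rw 2 [← ENNReal.rpow_one (ENNReal.ofReal (2 * r))]
        rw [← ENNReal.rpow_add_of_nonneg _ _ (by linarith) zero_le_one, sub_add_cancel]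

end Poincare

section Dirichlet

/-- The competitors in the infimum defining `lambdaPQ`: smooth functions on a normed space that
are compactly supported in `Ω` and do not vanish identically. -/
structure IsDirichletTest {E : Type*} [NormedAddCommGroup E] [NormedSpace ℝ E] (Ω : Set E)
    (v : E → ℝ) : Prop where
  contDiff : ContDiff ℝ (⊤ : ℕ∞) v
  hasCompactSupport : HasCompactSupport v
  tsupport_subset : tsupport v ⊆ Ω
  exists_ne_zero : ∃ x ∈ Ω, v x ≠ 0

namespace IsDirichletTest

variable {E : Type*} [NormedAddCommGroup E] [NormedSpace ℝ E] {Ω : Set E} {v : E → ℝ} {p : ℝ}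

theorem exists_of_isOpen [FiniteDimensional ℝ E] (hΩ : IsOpen Ω) (hne : Ω.Nonempty) :
    ∃ v, IsDirichletTest Ω v := by
  obtain ⟨x, hx⟩ := hne
  obtain ⟨v, hsupp, hcs, hv, -, hvx⟩ := exists_contDiff_tsupport_subset (n := ⊤) (hΩ.mem_nhds hx)
  exact ⟨v, hv, hcs, hsupp, x, hx, by simp [hvx]⟩

theorem comp_smul_add (hv : IsDirichletTest Ω v) {a : ℝ} (ha : a ≠ 0) (b : E) :
    IsDirichletTest ((fun x => a • x + b) ⁻¹' Ω) fun x => v (a • x + b) := by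
  let h : E ≃ₜ E := (Homeomorph.smulOfNeZero a ha).trans (Homeomorph.addRight b)
  obtain ⟨y, hy, hvy⟩ := hv.exists_ne_zero
  obtain ⟨x, rfl⟩ := h.surjective y
  refine ⟨hv.contDiff.comp (by fun_prop), hv.hasCompactSupport.comp_homeomorph h, ?_, x, hy, hvy⟩
  exact (tsupport_comp_eq_preimage v h).trans_subset (preimage_mono hv.tsupport_subset)

variable [MeasurableSpace E] [BorelSpace E] (μ : Measure E)

theorem lintegral_enorm_rpow_ne_zero [μ.IsOpenPosMeasure] (hv : IsDirichletTest Ω v) (p : ℝ) :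
    ∫⁻ x, ‖v x‖ₑ ^ p ∂μ ≠ 0 := by
  have hcont : Continuous v := hv.contDiff.continuous
  rw [Ne, lintegral_eq_zero_iff (hcont.measurable.enorm.pow_const p)]
  intro hzero
  have hae : v =ᵐ[μ] 0 := by
    filter_upwards [hzero] with x hx
    by_contra hvx
    exact (ENNReal.rpow_pos (enorm_pos.2 hvx) enorm_ne_top).ne' hx
  obtain ⟨x, -, hx⟩ := hv.exists_ne_zero
  exact hx (congrFun (Continuous.ae_eq_iff_eq μ hcont continuous_zero |>.1 hae) x)

variable [IsFiniteMeasureOnCompacts μ]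

theorem lintegral_enorm_rpow_ne_top (hv : IsDirichletTest Ω v) (hp : 0 < p) :
    ∫⁻ x, ‖v x‖ₑ ^ p ∂μ ≠ ∞ :=
  (lintegral_enorm_rpow_lt_top_of_hasCompactSupport hp hv.contDiff.continuous
    hv.hasCompactSupport).ne

theorem lintegral_enorm_fderiv_rpow_ne_top (hv : IsDirichletTest Ω v) (hp : 0 < p) :
    ∫⁻ x, ‖fderiv ℝ v x‖ₑ ^ p ∂μ ≠ ∞ :=
  (lintegral_enorm_rpow_lt_top_of_hasCompactSupport hp (hv.contDiff.continuous_fderiv (by simp))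
    (hv.hasCompactSupport.fderiv ℝ)).ne

end IsDirichletTest

variable {N : ℕ} {p q : ℝ} {Ω : Set (EuclideanSpace ℝ (Fin N))}
  {v : EuclideanSpace ℝ (Fin N) → ℝ}

theorem lambdaPQ_eq_sInf_image (p q : ℝ) (Ω : Set (EuclideanSpace ℝ (Fin N))) :
    lambdaPQ p q Ω = sInf (rayleighQuot p q Ω '' {v | IsDirichletTest Ω v}) := by
  unfold lambdaPQ
  congr 1
  ext R
  constructor
  · rintro ⟨v, hv, hcs, hsupp, hne, rfl⟩
    exact ⟨v, ⟨hv, hcs, hsupp, hne⟩, rfl⟩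
  · rintro ⟨v, ⟨hv, hcs, hsupp, hne⟩, rfl⟩
    exact ⟨v, hv, hcs, hsupp, hne, rfl⟩

theorem lambdaPQ_le_rayleighQuot (p q : ℝ) (hv : IsDirichletTest Ω v) :
    lambdaPQ p q Ω ≤ rayleighQuot p q Ω v := by
  rw [lambdaPQ_eq_sInf_image]
  exact csInf_le ⟨0, forall_mem_image.2 fun v _ => rayleighQuot_nonneg p q Ω v⟩
    (mem_image_of_mem _ hv)

theorem le_lambdaPQ (hΩ : IsOpen Ω) (hne : Ω.Nonempty) {R : ℝ}
    (h : ∀ v, IsDirichletTest Ω v → R ≤ rayleighQuot p q Ω v) : R ≤ lambdaPQ p q Ω := by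
  rw [lambdaPQ_eq_sInf_image]
  exact le_csInf (Set.Nonempty.image _ (IsDirichletTest.exists_of_isOpen hΩ hne))
    (forall_mem_image.2 h)

theorem exists_rayleighQuot_lt_of_lambdaPQ_lt (hΩ : IsOpen Ω) (hne : Ω.Nonempty) {R : ℝ}
    (h : lambdaPQ p q Ω < R) : ∃ v, IsDirichletTest Ω v ∧ rayleighQuot p q Ω v < R := by
  contrapose! h
  exact le_lambdaPQ hΩ hne h

theorem rayleighQuot_eq_rayleighQuot_univ (hp : p ≠ 0) (hq : q ≠ 0) (h : tsupport v ⊆ Ω) :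
    rayleighQuot p q Ω v = rayleighQuot p q univ v := by
  unfold rayleighQuot
  rw [Measure.restrict_univ,
    setIntegral_eq_integral_of_forall_compl_eq_zero (f := fun x => ‖fderiv ℝ v x‖ ^ p)
      fun x hx => by simp [fderiv_of_notMem_tsupport ℝ (notMem_subset h hx), hp],
    setIntegral_eq_integral_of_forall_compl_eq_zero (f := fun x => |v x| ^ q)
      fun x hx => by simp [image_eq_zero_of_notMem_tsupport (notMem_subset h hx), hq]]

theorem IsDirichletTest.ofReal_rayleighQuot (hv : IsDirichletTest Ω v) (hp : 0 < p) :
    ENNReal.ofReal (rayleighQuot p p Ω v) =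
      (∫⁻ x, ‖fderiv ℝ v x‖ₑ ^ p) / ∫⁻ x, ‖v x‖ₑ ^ p := by
  rw [rayleighQuot_eq_rayleighQuot_univ hp.ne' hp.ne' hv.tsupport_subset,
    rayleighQuot_eq_toReal hp.le hp.le hv.contDiff.continuous.measurable]
  simp only [Measure.restrict_univ, div_self hp.ne', ENNReal.rpow_one]
  exact ENNReal.ofReal_toReal (ENNReal.div_ne_top (hv.lintegral_enorm_fderiv_rpow_ne_top _ hp)
    (hv.lintegral_enorm_rpow_ne_zero _ p))

theorem inv_two_mul_rpow_le_lambdaPQ_ball [NeZero N] {c : EuclideanSpace ℝ (Fin N)} {r : ℝ}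
    (hp : 1 ≤ p) (hr : 0 < r) : ((2 * r) ^ p)⁻¹ ≤ lambdaPQ p p (ball c r) := by
  refine le_lambdaPQ isOpen_ball (nonempty_ball.2 hr) fun v hv => ?_
  have hp0 : 0 < p := one_pos.trans_le hp
  rw [← ENNReal.ofReal_le_ofReal_iff (rayleighQuot_nonneg _ _ _ _), hv.ofReal_rayleighQuot hp0,
    ENNReal.le_div_iff_mul_le (.inl (hv.lintegral_enorm_rpow_ne_zero _ p))
      (.inl (hv.lintegral_enorm_rpow_ne_top _ hp0)),
    ENNReal.ofReal_inv_of_pos (by positivity), ← ENNReal.ofReal_rpow_of_pos (by positivity),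
    ENNReal.inv_mul_le_iff (ENNReal.rpow_pos (by simpa) ENNReal.ofReal_ne_top).ne'
      (ENNReal.rpow_ne_top_of_nonneg hp0.le ENNReal.ofReal_ne_top)]
  exact lintegral_enorm_rpow_le_mul_lintegral_enorm_fderiv_rpow volume hp
    (hv.contDiff.of_le (by simp)) ((subset_tsupport v).trans hv.tsupport_subset)

theorem rayleighQuot_univ_comp_smul_add {a : ℝ} (ha : 0 < a) (b : EuclideanSpace ℝ (Fin N)) :
    rayleighQuot p q univ (fun x => v (a • x + b)) =
      a ^ (p - N + N * (p / q)) * rayleighQuot p q univ v := by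
  have hsubst (f : EuclideanSpace ℝ (Fin N) → ℝ) :
      ∫ x, f (a • x + b) = a ^ (-N : ℝ) * ∫ x, f x := by
    rw [Measure.integral_comp_smul volume (fun x => f (x + b)), integral_add_right_eq_self f,
      finrank_euclideanSpace_fin, abs_of_pos (by positivity), smul_eq_mul, Real.rpow_neg ha.le,
      Real.rpow_natCast]
  have hfderiv (x : EuclideanSpace ℝ (Fin N)) :
      ‖fderiv ℝ (fun x => v (a • x + b)) x‖ ^ p = a ^ p * ‖fderiv ℝ v (a • x + b)‖ ^ p := by
    rw [fderiv_comp_smul (f := fun x => v (x + b)), fderiv_comp_add_right, norm_smul,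
      Real.norm_of_nonneg ha.le, Real.mul_rpow ha.le (norm_nonneg _)]
  simp only [rayleighQuot, Measure.restrict_univ, hfderiv, integral_const_mul]
  rw [hsubst (fun x => ‖fderiv ℝ v x‖ ^ p), hsubst (fun x => |v x| ^ q),
    Real.mul_rpow (by positivity) (integral_nonneg fun x => by positivity), ← Real.rpow_mul ha.le,
    ← mul_assoc, ← Real.rpow_add ha, mul_div_mul_comm, ← Real.rpow_sub ha]
  ring_nf

theorem lambdaPQ_ball_mul_rpow_le (hp : p ≠ 0) (hq : q ≠ 0) (c c' : EuclideanSpace ℝ (Fin N))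
    {r s : ℝ} (hr : 0 < r) (hs : 0 < s) :
    lambdaPQ p q (ball c r) * r ^ (p - N + N * (p / q)) ≤
      lambdaPQ p q (ball c' s) * s ^ (p - N + N * (p / q)) := by
  set k := p - N + N * (p / q)
  rw [← div_le_iff₀ (by positivity)]
  refine le_lambdaPQ isOpen_ball (nonempty_ball.2 hs) fun v hv => ?_
  have ha : 0 < s / r := by positivity
  have hpre : (fun x => (s / r) • x + (c' - (s / r) • c)) ⁻¹' ball c' s = ball c r := by
    ext x
    rw [mem_preimage, mem_ball, mem_ball, dist_eq_norm, dist_eq_norm,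
      show (s / r) • x + (c' - (s / r) • c) - c' = (s / r) • (x - c) by module, norm_smul,
      Real.norm_of_nonneg ha.le, div_mul_eq_mul_div, div_lt_iff₀ hr, mul_lt_mul_iff_right₀ hs]
  have hw := hv.comp_smul_add ha.ne' (c' - (s / r) • c)
  rw [hpre] at hw
  have hle := lambdaPQ_le_rayleighQuot p q hw
  rw [rayleighQuot_eq_rayleighQuot_univ hp hq hw.tsupport_subset,
    rayleighQuot_univ_comp_smul_add ha, Real.div_rpow hs.le hr.le] at hle
  rw [rayleighQuot_eq_rayleighQuot_univ hp hq hv.tsupport_subset, div_le_iff₀ (by positivity),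
    mul_comm (rayleighQuot p q univ v)]
  rwa [div_mul_eq_mul_div, le_div_iff₀ (by positivity)] at hle

theorem lambdaPQ_ball_mul_rpow (hp : p ≠ 0) (hq : q ≠ 0) (c c' : EuclideanSpace ℝ (Fin N))
    {r s : ℝ} (hr : 0 < r) (hs : 0 < s) :
    lambdaPQ p q (ball c r) * r ^ (p - N + N * (p / q)) =
      lambdaPQ p q (ball c' s) * s ^ (p - N + N * (p / q)) :=
  (lambdaPQ_ball_mul_rpow_le hp hq c c' hr hs).antisymm (lambdaPQ_ball_mul_rpow_le hp hq c' c hs hr)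

end Dirichlet

theorem exists_eq_Ioo_of_isOpen_of_forall_Ioo_subset {α : Type*}
    [ConditionallyCompleteLinearOrder α] [DenselyOrdered α] [NoMaxOrder α] [TopologicalSpace α]
    [OrderTopology α] {a : α} {J : Set α} (hJ : IsOpen J) (hbdd : BddAbove J) (ha : J ⊆ Ioi a)
    (hIoo : ∀ t ∈ J, Ioo a t ⊆ J) : ∃ b, J = Ioo a b := by
  rcases J.eq_empty_or_nonempty with rfl | hne
  · exact ⟨a, (Ioo_self a).symm⟩
  refine ⟨sSup J, Subset.antisymm (fun t ht => ⟨ha ht, ?_⟩) fun t ht => ?_⟩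
  · obtain ⟨u, htu, hu⟩ := exists_Ico_subset_of_mem_nhds (hJ.mem_nhds ht) (exists_gt t)
    obtain ⟨s, hts, hsu⟩ := exists_between htu
    exact hts.trans_le (le_csSup hbdd (hu ⟨hts.le, hsu⟩))
  · obtain ⟨s, hs, hts⟩ := exists_lt_of_lt_csSup hne ht.2
    exact hIoo s hs ⟨ht.1, hts⟩

section Polar

open Module

variable {E : Type*} [NormedAddCommGroup E] [NormedSpace ℝ E] {Ω : Set E} {x₀ : E}

theorem exists_setOf_add_smul_mem_eq_Ioo (hΩo : IsOpen Ω) (hΩb : Bornology.IsBounded Ω)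
    (hstar : ∀ x ∈ Ω, openSegment ℝ x₀ x ⊆ Ω) {ω : E} (hω : ω ≠ 0) :
    ∃ ρ : ℝ, {t | 0 < t ∧ x₀ + t • ω ∈ Ω} = Ioo 0 ρ := by
  refine exists_eq_Ioo_of_isOpen_of_forall_Ioo_subset
    (isOpen_Ioi.inter (hΩo.preimage (f := fun t : ℝ => x₀ + t • ω) (by fun_prop))) ?_
    (fun t ht => ht.1) fun t ht s hs => ⟨hs.1, hstar _ ht.2 ?_⟩
  · obtain ⟨C, hC⟩ := hΩb.subset_closedBall x₀
    refine ⟨C / ‖ω‖, fun t ht => ?_⟩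
    rw [le_div_iff₀ (norm_pos_iff.2 hω)]
    simpa [norm_smul, abs_of_pos ht.1] using hC ht.2
  · refine ⟨1 - s / t, s / t, sub_pos.2 ((div_lt_one ht.1).2 hs.2), div_pos hs.1 ht.1, by ring, ?_⟩
    rw [smul_add, smul_smul, div_mul_cancel₀ _ ht.1.ne']
    module

variable [FiniteDimensional ℝ E] [MeasurableSpace E] [BorelSpace E] [Nontrivial E] (μ : Measure E)
  [μ.IsAddHaarMeasure]

theorem lintegral_eq_lintegral_toSphere_lintegral_Ioi {f : E → ℝ≥0∞} (hf : Measurable f) :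
    ∫⁻ x, f x ∂μ = ∫⁻ ω : sphere (0 : E) 1,
      (∫⁻ t in Ioi (0 : ℝ), ENNReal.ofReal (t ^ (finrank ℝ E - 1)) * f (t • (ω : E)))
        ∂μ.toSphere := by
  calc ∫⁻ x, f x ∂μ
      = ∫⁻ x : ({0}ᶜ : Set E), f x ∂(μ.comap (↑)) := by
        rw [lintegral_subtype_comap (measurableSet_singleton _).compl f, restrict_compl_singleton]
    _ = ∫⁻ z, f ((z.2 : ℝ) • (z.1 : E)) ∂μ.toSphere.prod (.volumeIoiPow (finrank ℝ E - 1)) := by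
        rw [← μ.measurePreserving_homeomorphUnitSphereProd.lintegral_comp
          (f := fun z => f ((z.2 : ℝ) • (z.1 : E))) (by fun_prop)]
        refine lintegral_congr fun x => ?_
        have hx : ‖(x : E)‖ ≠ 0 := norm_ne_zero_iff.2 x.2
        simp [homeomorphUnitSphereProd, smul_smul, hx]
    _ = _ := by
        rw [lintegral_prod _ (by fun_prop)]
        refine lintegral_congr fun ω => ?_
        rw [Measure.volumeIoiPow,
          lintegral_withDensity_eq_lintegral_mul _ (by fun_prop) (by fun_prop),
          ← lintegral_subtype_comap measurableSet_Ioi]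
        rfl

theorem exists_lintegral_Ioi_smul_lt {f g : E → ℝ≥0∞} (hf : Measurable f) (hg : Measurable g)
    (hlt : ∫⁻ x, f x ∂μ < ∫⁻ x, g x ∂μ) : ∃ ω ∈ sphere (0 : E) 1,
      ∫⁻ t in Ioi (0 : ℝ), ENNReal.ofReal (t ^ (finrank ℝ E - 1)) * f (t • ω) <
        ∫⁻ t in Ioi (0 : ℝ), ENNReal.ofReal (t ^ (finrank ℝ E - 1)) * g (t • ω) := by
  contrapose! hlt
  rw [lintegral_eq_lintegral_toSphere_lintegral_Ioi μ hf,
    lintegral_eq_lintegral_toSphere_lintegral_Ioi μ hg]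
  exact lintegral_mono fun ω => hlt ω ω.2

theorem setLIntegral_norm_sub_eq_lintegral_toSphere {h : ℝ → ℝ≥0∞} (hh : Measurable h)
    (hΩ : MeasurableSet Ω) : ∫⁻ x in Ω, h ‖x - x₀‖ ∂μ = ∫⁻ ω : sphere (0 : E) 1,
      (∫⁻ t in {t | 0 < t ∧ x₀ + t • (ω : E) ∈ Ω},
        ENNReal.ofReal (t ^ (finrank ℝ E - 1)) * h t) ∂μ.toSphere := by
  have hmeas : Measurable fun x => Ω.indicator (fun x => h ‖x - x₀‖) (x₀ + x) :=
    Measurable.comp (Measurable.indicator (by fun_prop) hΩ) (by fun_prop)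
  rw [← lintegral_indicator hΩ, ← lintegral_add_left_eq_self _ x₀,
    lintegral_eq_lintegral_toSphere_lintegral_Ioi μ hmeas]
  refine lintegral_congr fun ω => ?_
  have hray : MeasurableSet {t : ℝ | x₀ + t • (ω : E) ∈ Ω} :=
    hΩ.preimage (f := fun t : ℝ => x₀ + t • (ω : E)) (by fun_prop)
  rw [show {t : ℝ | 0 < t ∧ x₀ + t • (ω : E) ∈ Ω} = {t | x₀ + t • (ω : E) ∈ Ω} ∩ Ioi 0 from
    inter_comm _ _, ← Measure.restrict_restrict hray, ← lintegral_indicator hray]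
  refine setLIntegral_congr_fun measurableSet_Ioi fun t (ht : 0 < t) => ?_
  by_cases hmem : x₀ + t • (ω : E) ∈ Ω <;> simp [indicator, hmem, norm_smul, abs_of_pos ht]

theorem setLIntegral_norm_sub_le_of_forall_lintegral_Ioo_le {f g : ℝ → ℝ≥0∞} (hf : Measurable f)
    (hg : Measurable g)
    (hfg : ∀ ρ : ℝ, ∫⁻ t in Ioo 0 ρ, ENNReal.ofReal (t ^ (finrank ℝ E - 1)) * f t ≤
      ∫⁻ t in Ioo 0 ρ, ENNReal.ofReal (t ^ (finrank ℝ E - 1)) * g t)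
    (hΩo : IsOpen Ω) (hΩb : Bornology.IsBounded Ω) (hstar : ∀ x ∈ Ω, openSegment ℝ x₀ x ⊆ Ω) :
    ∫⁻ x in Ω, f ‖x - x₀‖ ∂μ ≤ ∫⁻ x in Ω, g ‖x - x₀‖ ∂μ := by
  rw [setLIntegral_norm_sub_eq_lintegral_toSphere μ hf hΩo.measurableSet,
    setLIntegral_norm_sub_eq_lintegral_toSphere μ hg hΩo.measurableSet]
  refine lintegral_mono fun ω => ?_
  obtain ⟨ρ, hρ⟩ := exists_setOf_add_smul_mem_eq_Ioo hΩo hΩb hstar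
    (ne_zero_of_mem_unit_sphere ω)
  simpa only [hρ] using hfg ρ

end Polar

section RadialFunction

variable {E F : Type*} [NormedAddCommGroup E] [NormedSpace ℝ E] [NormedAddCommGroup F]
  [NormedSpace ℝ F]

theorem differentiableAt_of_differentiableAt_comp_norm_sub {φ : ℝ → F} {x x₀ : E} (hx : x ≠ x₀)
    (h : DifferentiableAt ℝ (fun y => φ ‖y - x₀‖) x) : DifferentiableAt ℝ φ ‖x - x₀‖ := by
  have hpos : 0 < ‖x - x₀‖ := norm_pos_iff.2 (sub_ne_zero.2 hx)
  let ray : ℝ → E := fun t => x₀ + (t / ‖x - x₀‖) • (x - x₀)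
  have hray : ray ‖x - x₀‖ = x := by simp [ray, hpos.ne']
  have hcomp : DifferentiableAt ℝ (fun t => φ ‖ray t - x₀‖) ‖x - x₀‖ :=
    DifferentiableAt.comp (g := fun y => φ ‖y - x₀‖) _ (by rwa [hray]) (by fun_prop)
  refine hcomp.congr_of_eventuallyEq ?_
  filter_upwards [Ioi_mem_nhds hpos] with t (ht : 0 < t)
  simp [ray, norm_smul, abs_of_pos ht, hpos.ne']

theorem norm_fderiv_comp_norm_sub_le (φ : ℝ → F) {x x₀ : E} (hx : x ≠ x₀) :
    ‖fderiv ℝ (fun y => φ ‖y - x₀‖) x‖ ≤ ‖deriv φ ‖x - x₀‖‖ := by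
  by_cases hdiff : DifferentiableAt ℝ (fun y => φ ‖y - x₀‖) x
  swap
  · simp [fderiv_zero_of_not_differentiableAt hdiff]
  have hφ := (differentiableAt_of_differentiableAt_comp_norm_sub hx hdiff).hasDerivAt
  refine le_of_forall_pos_le_add fun ε hε => norm_fderiv_le_of_lip' ℝ (by positivity) ?_
  have hlip : ∀ᶠ t in 𝓝 ‖x - x₀‖,
      ‖φ t - φ ‖x - x₀‖‖ ≤ (‖deriv φ ‖x - x₀‖‖ + ε) * ‖t - ‖x - x₀‖‖ := by
    filter_upwards [(hasDerivAt_iff_isLittleO.1 hφ).def hε] with t ht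
    rw [add_mul, mul_comm ‖deriv φ ‖x - x₀‖‖, ← norm_smul]
    linarith [norm_sub_norm_le (φ t - φ ‖x - x₀‖) ((t - ‖x - x₀‖) • deriv φ ‖x - x₀‖)]
  have hcont : Continuous fun y => ‖y - x₀‖ := by fun_prop
  filter_upwards [hcont.continuousAt.eventually hlip] with y hy
  refine hy.trans ?_
  gcongr
  simpa using abs_norm_sub_norm_le (y - x₀) (x - x₀)

end RadialFunction

theorem setLIntegral_eq_setLIntegral_inter {α : Type*} {m : MeasurableSpace α} (μ : Measure α)
    {f : α → ℝ≥0∞} {s t : Set α} (ht : MeasurableSet t) (hf : Function.support f ⊆ t) :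
    ∫⁻ x in s, f x ∂μ = ∫⁻ x in s ∩ t, f x ∂μ := by
  rw [inter_comm, ← Measure.restrict_restrict ht, setLIntegral_eq_of_support_subset hf]

section RisingSun

theorem lintegral_Ioo_ofReal_eq_ofReal_intervalIntegral {f : ℝ → ℝ} {a b : ℝ} (hab : a ≤ b)
    (hf : IntervalIntegrable f volume a b) (hf0 : ∀ t ∈ Ioo a b, 0 ≤ f t) :
    ∫⁻ t in Ioo a b, ENNReal.ofReal (f t) = ENNReal.ofReal (∫ t in a..b, f t) := by
  rw [intervalIntegral.integral_of_le hab, integral_Ioc_eq_integral_Ioo,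
    ofReal_integral_eq_lintegral_ofReal ((intervalIntegrable_iff_integrableOn_Ioo_of_le hab).1 hf)
      (ae_restrict_of_forall_mem measurableSet_Ioo hf0)]

-- `c` maximises the primitive of `f`.
theorem exists_forall_intervalIntegral_nonpos {f : ℝ → ℝ} {a b : ℝ} (hab : a ≤ b)
    (hf : IntervalIntegrable f volume a b) (hneg : ∫ t in a..b, f t < 0) :
    ∃ c ∈ Icc a b, (∀ ρ ∈ Icc c b, ∫ t in c..ρ, f t ≤ 0) ∧ ∫ t in c..b, f t < 0 := by
  have hcont : ContinuousOn (fun x => ∫ t in a..x, f t) (Icc a b) := by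
    simpa [uIcc_of_le hab] using
      intervalIntegral.continuousOn_primitive_interval' hf left_mem_uIcc
  obtain ⟨c, hc, hmax⟩ := isCompact_Icc.exists_isMaxOn (nonempty_Icc.2 hab) hcont
  have hint {x : ℝ} (hx : x ∈ Icc a b) : IntervalIntegrable f volume a x :=
    hf.mono_set (uIcc_subset_uIcc_left (by rwa [uIcc_of_le hab]))
  have hsub {ρ : ℝ} (hρ : ρ ∈ Icc a b) :
      ∫ t in c..ρ, f t = (∫ t in a..ρ, f t) - ∫ t in a..c, f t :=
    (intervalIntegral.integral_interval_sub_left (hint hρ) (hint hc)).symm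
  have hnonneg : 0 ≤ ∫ t in a..c, f t := by simpa using hmax (left_mem_Icc.2 hab)
  refine ⟨c, hc, fun ρ hρ => ?_, ?_⟩
  · have hρ' : ρ ∈ Icc a b := ⟨hc.1.trans hρ.1, hρ.2⟩
    rw [hsub hρ', sub_nonpos]
    exact hmax hρ'
  · rw [hsub (right_mem_Icc.2 hab)]
    linarith

theorem exists_forall_lintegral_Ioo_le_of_lintegral_Ioi_lt {f g : ℝ → ℝ} {a R : ℝ}
    (hf : Continuous f) (hg : Continuous g) (hf0 : ∀ t ≥ a, 0 ≤ f t) (hg0 : ∀ t ≥ a, 0 ≤ g t)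
    (hfR : ∀ t ≥ R, f t = 0) (hgR : ∀ t ≥ R, g t = 0)
    (hlt : ∫⁻ t in Ioi a, ENNReal.ofReal (f t) < ∫⁻ t in Ioi a, ENNReal.ofReal (g t)) :
    ∃ c ≥ a, (∀ ρ, ∫⁻ t in Ioo c ρ, ENNReal.ofReal (f t) ≤ ∫⁻ t in Ioo c ρ, ENNReal.ofReal (g t)) ∧
      ∫⁻ t in Ioi c, ENNReal.ofReal (f t) < ∫⁻ t in Ioi c, ENNReal.ofReal (g t) := by
  have hcut {h : ℝ → ℝ} (hR : ∀ t ≥ R, h t = 0) (s : Set ℝ) :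
      ∫⁻ t in s, ENNReal.ofReal (h t) = ∫⁻ t in s ∩ Iio R, ENNReal.ofReal (h t) := by
    refine setLIntegral_eq_setLIntegral_inter _ measurableSet_Iio fun t ht => ?_
    contrapose! ht
    simp [hR t (not_lt.1 ht)]
  have hval {h : ℝ → ℝ} (hh : Continuous h) (h0 : ∀ t ≥ a, 0 ≤ h t) {x y : ℝ} (hx : a ≤ x)
      (hxy : x ≤ y) : ∫⁻ t in Ioo x y, ENNReal.ofReal (h t) = ENNReal.ofReal (∫ t in x..y, h t) :=
    lintegral_Ioo_ofReal_eq_ofReal_intervalIntegral hxy (hh.intervalIntegrable x y)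
      fun t ht => h0 t (hx.trans ht.1.le)
  have hf_nonneg {x y : ℝ} (hx : a ≤ x) (hxy : x ≤ y) : 0 ≤ ∫ t in x..y, f t :=
    intervalIntegral.integral_nonneg hxy fun t ht => hf0 t (hx.trans ht.1)
  simp only [hcut hfR (Ioi _), hcut hgR (Ioi _), Ioi_inter_Iio] at hlt ⊢
  have haR : a ≤ R := by
    by_contra! h
    simp [Ioo_eq_empty h.not_gt] at hlt
  have hint (x y : ℝ) : ∫ t in x..y, (f t - g t) = (∫ t in x..y, f t) - ∫ t in x..y, g t :=
    intervalIntegral.integral_sub (hf.intervalIntegrable x y) (hg.intervalIntegrable x y)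
  rw [hval hf hf0 le_rfl haR, hval hg hg0 le_rfl haR,
    ENNReal.ofReal_lt_ofReal_iff_of_nonneg (hf_nonneg le_rfl haR), ← sub_neg, ← hint] at hlt
  obtain ⟨c, hc, hle, hneg⟩ := exists_forall_intervalIntegral_nonpos haR
    ((hf.sub hg).intervalIntegrable a R) hlt
  refine ⟨c, hc.1, fun ρ => ?_, ?_⟩
  · rw [hcut hfR, hcut hgR, Ioo_inter_Iio]
    rcases le_total c (min ρ R) with hρ | hρ
    · rw [hval hf hf0 hc.1 hρ, hval hg hg0 hc.1 hρ]
      refine ENNReal.ofReal_le_ofReal ?_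
      rw [← sub_nonpos, ← hint]
      exact hle _ ⟨hρ, min_le_right _ _⟩
    · simp [Ioo_eq_empty hρ.not_gt]
  · rw [hval hf hf0 hc.1 hc.2, hval hg hg0 hc.1 hc.2,
      ENNReal.ofReal_lt_ofReal_iff_of_nonneg (hf_nonneg hc.1 hc.2), ← sub_neg, ← hint]
    exact hneg

end RisingSun

section EnergyProfile

theorem deriv_comp_max_of_le {F : Type*} [NormedAddCommGroup F] [NormedSpace ℝ F] (g : ℝ → F)
    {a t : ℝ} (h : t ≤ a) : deriv (fun s => g (max s a)) t = 0 := by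
  by_cases hdiff : DifferentiableAt ℝ (fun s => g (max s a)) t
  · rw [← hdiff.derivWithin (uniqueDiffWithinAt_Iic t)]
    rw [derivWithin_congr (f := fun _ => g a) (fun s hs => by rw [max_eq_right (hs.trans h)])
      (by rw [max_eq_right h])]
    simp
  · exact deriv_zero_of_not_differentiableAt hdiff

theorem deriv_comp_max_of_lt {F : Type*} [NormedAddCommGroup F] [NormedSpace ℝ F] (g : ℝ → F)
    {a t : ℝ} (h : a < t) : deriv (fun s => g (max s a)) t = deriv g t := by
  refine Filter.EventuallyEq.deriv_eq ?_
  filter_upwards [Ioi_mem_nhds h] with s hs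
  rw [max_eq_left (le_of_lt hs)]

/-- A one-dimensional substitute for the radial part of a first Dirichlet eigenfunction of the
ball of radius `R` in dimension `m + 1`: a nontrivial Lipschitz profile `φ` vanishing near `R` and
beyond, whose radial `p`-energy on *every* ball centred at the origin is at most `Λ` times the
`p`-th power of its norm there. -/
structure IsEnergyProfile (m : ℕ) (p : ℝ) (Λ : ℝ≥0) (R : ℝ) (φ : ℝ → ℝ) : Prop where
  exists_lipschitzWith : ∃ K, LipschitzWith K φ
  exists_eq_zero : ∃ R' < R, ∀ t ≥ R', φ t = 0
  exists_ne_zero : ∃ t > 0, φ t ≠ 0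
  lintegral_le (ρ : ℝ) : ∫⁻ t in Ioo 0 ρ, ENNReal.ofReal (t ^ m) * ‖deriv φ t‖ₑ ^ p ≤
    ∫⁻ t in Ioo 0 ρ, ENNReal.ofReal (t ^ m) * (Λ * ‖φ t‖ₑ ^ p)

variable {m : ℕ} {p R : ℝ} {Λ : ℝ≥0}

-- Freezing `g` on `[0, c]` propagates the inequality to the balls of radius at most `c`.
theorem isEnergyProfile_comp_max {g : ℝ → ℝ} {c R' : ℝ} {K : ℝ≥0} (hp : 0 < p)
    (hg : LipschitzWith K g) (hR' : R' < R) (hgR : ∀ t ≥ R', g t = 0) (hc : 0 ≤ c)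
    (hne : ∃ t > c, g t ≠ 0)
    (hle : ∀ ρ, ∫⁻ t in Ioo c ρ, ENNReal.ofReal (t ^ m) * ‖deriv g t‖ₑ ^ p ≤
      ∫⁻ t in Ioo c ρ, ENNReal.ofReal (t ^ m) * (Λ * ‖g t‖ₑ ^ p)) :
    IsEnergyProfile m p Λ R fun t => g (max t c) where
  exists_lipschitzWith := ⟨_, hg.comp (LipschitzWith.id.max_const c)⟩
  exists_eq_zero := ⟨R', hR', fun t ht => hgR _ (ht.le.trans (le_max_left t c))⟩
  exists_ne_zero := by
    obtain ⟨t, ht, hgt⟩ := hne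
    exact ⟨t, hc.trans_lt ht, by rwa [max_eq_left (le_of_lt ht)]⟩
  lintegral_le ρ := by
    have hsub : Ioo c ρ ⊆ Ioo 0 ρ := Ioo_subset_Ioo_left hc
    calc ∫⁻ t in Ioo 0 ρ, ENNReal.ofReal (t ^ m) * ‖deriv (fun s => g (max s c)) t‖ₑ ^ p
        = ∫⁻ t in Ioo c ρ, ENNReal.ofReal (t ^ m) * ‖deriv (fun s => g (max s c)) t‖ₑ ^ p := by
          rw [setLIntegral_eq_setLIntegral_inter _ (measurableSet_Ioi (a := c)), Ioo_inter_Ioi,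
            max_eq_right hc]
          intro t ht
          contrapose! ht
          simp [deriv_comp_max_of_le g (not_lt.1 ht), hp]
      _ = ∫⁻ t in Ioo c ρ, ENNReal.ofReal (t ^ m) * ‖deriv g t‖ₑ ^ p :=
          setLIntegral_congr_fun measurableSet_Ioo fun t ht => by
            simp only [deriv_comp_max_of_lt g ht.1]
      _ ≤ ∫⁻ t in Ioo c ρ, ENNReal.ofReal (t ^ m) * (Λ * ‖g t‖ₑ ^ p) := hle ρ
      _ = ∫⁻ t in Ioo c ρ, ENNReal.ofReal (t ^ m) * (Λ * ‖g (max t c)‖ₑ ^ p) :=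
          setLIntegral_congr_fun measurableSet_Ioo fun t ht => by
            simp only [max_eq_left ht.1.le]
      _ ≤ ∫⁻ t in Ioo 0 ρ, ENNReal.ofReal (t ^ m) * (Λ * ‖g (max t c)‖ₑ ^ p) :=
          lintegral_mono_set hsub

theorem exists_isEnergyProfile_of_lintegral_Ioi_lt {g : ℝ → ℝ} (hp : 0 < p) (hg : ContDiff ℝ 1 g)
    (hcs : HasCompactSupport g) (hsupp : tsupport g ⊆ ball 0 R)
    (hlt : ∫⁻ t in Ioi 0, ENNReal.ofReal (t ^ m) * ‖deriv g t‖ₑ ^ p <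
      ∫⁻ t in Ioi 0, ENNReal.ofReal (t ^ m) * (Λ * ‖g t‖ₑ ^ p)) :
    ∃ φ, IsEnergyProfile m p Λ R φ := by
  obtain ⟨R', hR', hsub⟩ := exists_lt_subset_ball (isClosed_tsupport g) hsupp
  have hnotMem {t : ℝ} (ht : t ≥ R') : t ∉ tsupport g := fun hmem =>
    ht.not_gt ((le_abs_self t).trans_lt (by simpa using hsub hmem))
  have hgR (t : ℝ) (ht : t ≥ R') : g t = 0 := image_eq_zero_of_notMem_tsupport (hnotMem ht)
  have hg'R (t : ℝ) (ht : t ≥ R') : deriv g t = 0 := deriv_of_notMem_tsupport (hnotMem ht)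
  have henergy (c : ℝ≥0) {s : Set ℝ} (hs : MeasurableSet s) (hs0 : s ⊆ Ici 0) (y : ℝ → ℝ) :
      ∫⁻ t in s, ENNReal.ofReal (c * (t ^ m * ‖y t‖ ^ p)) =
        ∫⁻ t in s, ENNReal.ofReal (t ^ m) * (c * ‖y t‖ₑ ^ p) := by
    refine setLIntegral_congr_fun hs fun t ht => ?_
    have ht0 : 0 ≤ t := hs0 ht
    rw [ENNReal.ofReal_mul c.coe_nonneg, ENNReal.ofReal_mul (by positivity),
      ENNReal.ofReal_coe_nnreal, ← ENNReal.ofReal_rpow_of_nonneg (norm_nonneg _) hp.le, ofReal_norm,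
      mul_left_comm]
  have hcont (c : ℝ≥0) {y : ℝ → ℝ} (hy : Continuous y) :
      Continuous fun t => c * (t ^ m * ‖y t‖ ^ p) := by
    have := hy.norm.rpow_const (p := p) fun _ => .inr hp.le
    fun_prop
  obtain ⟨c, hc, hle, hltc⟩ := exists_forall_lintegral_Ioo_le_of_lintegral_Ioi_lt (a := 0) (R := R')
    (hcont 1 hg.continuous_deriv_one) (hcont Λ hg.continuous)
    (fun t ht => by positivity) (fun t ht => by positivity)
    (fun t ht => by simp [hg'R t ht, hp.ne']) (fun t ht => by simp [hgR t ht, hp.ne']) <| by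
      simpa only [henergy _ measurableSet_Ioi Ioi_subset_Ici_self, ENNReal.coe_one,
        one_mul] using hlt
  obtain ⟨K, hK⟩ := hg.lipschitzWith_of_hasCompactSupport hcs one_ne_zero
  refine ⟨_, isEnergyProfile_comp_max hp hK hR' hgR hc ?_ fun ρ => ?_⟩
  · by_contra! hzero
    refine not_lt_zero (hltc.trans_eq ?_)
    rw [setLIntegral_congr_fun measurableSet_Ioi fun t ht => by rw [hzero t ht]]
    simp [Real.zero_rpow hp.ne']
  · have hIoo : Ioo c ρ ⊆ Ici 0 := fun t ht => hc.le.trans ht.1.le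
    simpa only [henergy _ measurableSet_Ioo hIoo, ENNReal.coe_one, one_mul] using hle ρ

end EnergyProfile

section RadialCompetitor

open Module

variable {E : Type*} [NormedAddCommGroup E] {p R : ℝ} {Λ : ℝ≥0} {φ : ℝ → ℝ} {m : ℕ}

theorem IsEnergyProfile.exists_lipschitzWith_comp_norm_sub (hφ : IsEnergyProfile m p Λ R φ)
    (x₀ : E) : ∃ K, LipschitzWith K fun x => φ ‖x - x₀‖ := by
  obtain ⟨K, hK⟩ := hφ.exists_lipschitzWith
  exact ⟨_, hK.comp (lipschitzWith_one_norm.comp (LipschitzWith.id.sub (.const x₀)))⟩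

theorem IsEnergyProfile.exists_tsupport_comp_norm_sub_subset (hφ : IsEnergyProfile m p Λ R φ) :
    ∃ R' < R, ∀ x₀ : E, tsupport (fun x => φ ‖x - x₀‖) ⊆ closedBall x₀ R' := by
  obtain ⟨R', hR', hzero⟩ := hφ.exists_eq_zero
  refine ⟨R', hR', fun x₀ => closure_minimal (fun x hx => ?_) isClosed_closedBall⟩
  contrapose! hx
  rw [mem_closedBall, not_le, dist_eq_norm] at hx
  simp [hzero _ hx.le]

variable [NormedSpace ℝ E] [FiniteDimensional ℝ E] [Nontrivial E] [MeasurableSpace E] [BorelSpace E]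
  (μ : Measure E) [μ.IsAddHaarMeasure]

theorem exists_isEnergyProfile_of_lintegral_lt {w : E → ℝ} (hp : 0 < p) (hw : ContDiff ℝ 1 w)
    (hcs : HasCompactSupport w) (hsupp : tsupport w ⊆ ball 0 R)
    (hlt : ∫⁻ x, ‖fderiv ℝ w x‖ₑ ^ p ∂μ < Λ * ∫⁻ x, ‖w x‖ₑ ^ p ∂μ) :
    ∃ φ, IsEnergyProfile (finrank ℝ E - 1) p Λ R φ := by
  have hmeas : Measurable fun x => ‖w x‖ₑ ^ p := hw.continuous.measurable.enorm.pow_const p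
  rw [← lintegral_const_mul _ hmeas] at hlt
  obtain ⟨ω, hω, hray⟩ := exists_lintegral_Ioi_smul_lt μ
    ((measurable_fderiv ℝ w).enorm.pow_const p) (hmeas.const_mul _) hlt
  have hω1 : ‖ω‖ = 1 := mem_sphere_zero_iff_norm.1 hω
  have hsub : tsupport (fun t : ℝ => w (t • ω)) ⊆ (fun t : ℝ => t • ω) ⁻¹' tsupport w :=
    tsupport_comp_subset_preimage w (by fun_prop)
  have hderiv (t : ℝ) : ‖deriv (fun t : ℝ => w (t • ω)) t‖ₑ ≤ ‖fderiv ℝ w (t • ω)‖ₑ := by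
    have hline : HasDerivAt (fun t : ℝ => t • ω) ω t := by
      simpa using (hasDerivAt_id t).smul_const ω
    have hcomp : HasDerivAt (fun t : ℝ => w (t • ω)) (fderiv ℝ w (t • ω) ω) t :=
      (hw.differentiable one_ne_zero (t • ω)).hasFDerivAt.comp_hasDerivAt t hline
    rw [enorm_le_iff_norm_le, hcomp.deriv]
    simpa [hω1] using (fderiv ℝ w (t • ω)).le_opNorm ω
  refine exists_isEnergyProfile_of_lintegral_Ioi_lt (g := fun t => w (t • ω)) hp (by fun_prop)
    ?_ ?_ (lt_of_le_of_lt ?_ hray)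
  · exact hcs.comp_isClosedEmbedding
      (isClosedEmbedding_smul_left (ne_zero_of_mem_unit_sphere ⟨ω, hω⟩))
  · exact fun t ht => by simpa [norm_smul, hω1] using hsupp (hsub ht)
  · gcongr with t
    exact hderiv t

theorem IsEnergyProfile.setLIntegral_enorm_fderiv_le
    (hφ : IsEnergyProfile (finrank ℝ E - 1) p Λ R φ) {Ω : Set E} {x₀ : E} (hp : 0 ≤ p)
    (hΩo : IsOpen Ω) (hΩb : Bornology.IsBounded Ω) (hstar : ∀ x ∈ Ω, openSegment ℝ x₀ x ⊆ Ω) :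
    ∫⁻ x in Ω, ‖fderiv ℝ (fun y => φ ‖y - x₀‖) x‖ₑ ^ p ∂μ ≤
      Λ * ∫⁻ x in Ω, ‖φ ‖x - x₀‖‖ₑ ^ p ∂μ := by
  obtain ⟨K, hK⟩ := hφ.exists_lipschitzWith
  have hmeas : Measurable fun t => ‖φ t‖ₑ ^ p := hK.continuous.measurable.enorm.pow_const p
  calc ∫⁻ x in Ω, ‖fderiv ℝ (fun y => φ ‖y - x₀‖) x‖ₑ ^ p ∂μ
      ≤ ∫⁻ x in Ω, ‖deriv φ ‖x - x₀‖‖ₑ ^ p ∂μ := by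
        refine lintegral_mono_ae (ae_restrict_of_ae ?_)
        filter_upwards [Measure.ae_ne μ x₀] with x hx
        gcongr
        exact enorm_le_iff_norm_le.2 (norm_fderiv_comp_norm_sub_le φ hx)
    _ ≤ ∫⁻ x in Ω, Λ * ‖φ ‖x - x₀‖‖ₑ ^ p ∂μ :=
        setLIntegral_norm_sub_le_of_forall_lintegral_Ioo_le μ (f := fun t => ‖deriv φ t‖ₑ ^ p)
          (g := fun t => Λ * ‖φ t‖ₑ ^ p) ((measurable_deriv φ).enorm.pow_const p)
          (hmeas.const_mul _) hφ.lintegral_le hΩo hΩb hstar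
    _ = Λ * ∫⁻ x in Ω, ‖φ ‖x - x₀‖‖ₑ ^ p ∂μ :=
        lintegral_const_mul _ (hmeas.comp (f := fun x => ‖x - x₀‖) (by fun_prop))

end RadialCompetitor

section DisjointSupports

theorem map_add_of_disjoint_support {α A B : Type*} [AddZeroClass A] [AddZeroClass B] {F : A → B}
    (hF : F 0 = 0) {u v : α → A} (h : Disjoint (Function.support u) (Function.support v)) (x : α) :
    F (u x + v x) = F (u x) + F (v x) := by
  by_cases hu : u x = 0
  · simp [hu, hF]
  · simp [Function.notMem_support.1 (h.notMem_of_mem_left hu), hF]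

theorem enorm_add_rpow_of_disjoint_support {α F : Type*} [NormedAddCommGroup F] {u v : α → F}
    {p : ℝ} (hp : 0 < p) (h : Disjoint (Function.support u) (Function.support v)) (x : α) :
    ‖u x + v x‖ₑ ^ p = ‖u x‖ₑ ^ p + ‖v x‖ₑ ^ p :=
  map_add_of_disjoint_support (F := fun y : F => ‖y‖ₑ ^ p) (by simp [hp]) h x

variable {E : Type*} [NormedAddCommGroup E] [NormedSpace ℝ E]

theorem fderiv_add_of_disjoint_tsupport {u v : E → ℝ} (h : Disjoint (tsupport u) (tsupport v))
    (x : E) : fderiv ℝ (fun y => u y + v y) x = fderiv ℝ u x + fderiv ℝ v x := by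
  by_cases hu : x ∈ tsupport u
  · have hv := h.notMem_of_mem_left hu
    rw [fderiv_of_notMem_tsupport ℝ hv, add_zero]
    refine Filter.EventuallyEq.fderiv_eq ?_
    filter_upwards [notMem_tsupport_iff_eventuallyEq.1 hv] with y hy
    simp [hy]
  · rw [fderiv_of_notMem_tsupport ℝ hu, zero_add]
    refine Filter.EventuallyEq.fderiv_eq ?_
    filter_upwards [notMem_tsupport_iff_eventuallyEq.1 hu] with y hy
    simp [hy]

variable [MeasurableSpace E] {μ : Measure E} {u v : E → ℝ} {p : ℝ} {Λ : ℝ≥0∞}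

theorem lintegral_enorm_fderiv_const_mul_rpow_le (hp : 0 ≤ p) (c : ℝ)
    (hu : ∫⁻ x, ‖fderiv ℝ u x‖ₑ ^ p ∂μ ≤ Λ * ∫⁻ x, ‖u x‖ₑ ^ p ∂μ) :
    ∫⁻ x, ‖fderiv ℝ (fun y => c * u y) x‖ₑ ^ p ∂μ ≤ Λ * ∫⁻ x, ‖c * u x‖ₑ ^ p ∂μ := by
  have hc : ‖c‖ₑ ^ p ≠ ∞ := ENNReal.rpow_ne_top_of_nonneg hp enorm_ne_top
  have hfderiv (x : E) : fderiv ℝ (fun y => c * u y) x = c • fderiv ℝ u x :=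
    congrFun (fderiv_const_smul_field c) x
  simp only [hfderiv, enorm_smul, enorm_mul, ENNReal.mul_rpow_of_nonneg _ _ hp,
    lintegral_const_mul' _ _ hc, mul_left_comm Λ]
  gcongr

theorem lintegral_enorm_fderiv_add_rpow_le [BorelSpace E] (hp : 0 < p) (hum : Measurable u)
    (h : Disjoint (tsupport u) (tsupport v))
    (hu : ∫⁻ x, ‖fderiv ℝ u x‖ₑ ^ p ∂μ ≤ Λ * ∫⁻ x, ‖u x‖ₑ ^ p ∂μ)
    (hv : ∫⁻ x, ‖fderiv ℝ v x‖ₑ ^ p ∂μ ≤ Λ * ∫⁻ x, ‖v x‖ₑ ^ p ∂μ) :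
    ∫⁻ x, ‖fderiv ℝ (fun y => u y + v y) x‖ₑ ^ p ∂μ ≤ Λ * ∫⁻ x, ‖u x + v x‖ₑ ^ p ∂μ := by
  have hsupp : Disjoint (Function.support u) (Function.support v) :=
    h.mono (subset_tsupport u) (subset_tsupport v)
  have hsupp' : Disjoint (Function.support (fderiv ℝ u)) (Function.support (fderiv ℝ v)) :=
    h.mono (support_fderiv_subset ℝ) (support_fderiv_subset ℝ)
  simp only [fderiv_add_of_disjoint_tsupport h, enorm_add_rpow_of_disjoint_support hp hsupp,
    enorm_add_rpow_of_disjoint_support hp hsupp']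
  rw [lintegral_add_left ((measurable_fderiv ℝ u).enorm.pow_const p),
    lintegral_add_left (hum.enorm.pow_const p), mul_add]
  gcongr

end DisjointSupports

section Neumann

theorem exists_abs_rpow_sub_two_mul_self_eq {q : ℝ} (hq : 1 < q) (s : ℝ) :
    ∃ t : ℝ, |t| ^ (q - 2) * t = s := by
  have hnonneg {a : ℝ} (ha : 0 ≤ a) : ∃ t : ℝ, |t| ^ (q - 2) * t = a := by
    refine ⟨a ^ (q - 1)⁻¹, ?_⟩
    have ht : 0 ≤ a ^ (q - 1)⁻¹ := by positivity
    rw [abs_of_nonneg ht, ← Real.rpow_add_one' ht (by linarith), ← Real.rpow_mul ha,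
      show q - 2 + 1 = q - 1 by ring, inv_mul_cancel₀ (by linarith), Real.rpow_one]
  rcases le_total 0 s with hs | hs
  · exact hnonneg hs
  · obtain ⟨t, ht⟩ := hnonneg (neg_nonneg.2 hs)
    exact ⟨-t, by rw [abs_neg, mul_neg, ht, neg_neg]⟩

theorem exists_abs_rpow_sub_two_mul_self_mul_add_eq_zero {q : ℝ} (hq : 1 < q) (a b : ℝ) :
    ∃ α β : ℝ, (α ≠ 0 ∨ β ≠ 0) ∧ |α| ^ (q - 2) * α * a + |β| ^ (q - 2) * β * b = 0 := by
  by_cases ha : a = 0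
  · exact ⟨1, 0, by simp, by simp [ha]⟩
  · obtain ⟨α, hα⟩ := exists_abs_rpow_sub_two_mul_self_eq hq (-b / a)
    refine ⟨α, 1, by simp, ?_⟩
    rw [hα, div_mul_cancel₀ _ ha]
    simp

theorem integrableOn_abs_rpow_sub_two_mul_self {E : Type*} [MetricSpace E] [ProperSpace E]
    [MeasurableSpace E] [BorelSpace E] {μ : Measure E} [IsFiniteMeasureOnCompacts μ] {Ω : Set E}
    {u : E → ℝ} {q : ℝ} (hq : 1 < q) (hΩ : Bornology.IsBounded Ω) (hu : Continuous u) :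
    IntegrableOn (fun x => |u x| ^ (q - 2) * u x) Ω μ := by
  have hcont : Continuous fun x => |u x| ^ (q - 1) :=
    hu.abs.rpow_const fun _ => .inr (by linarith)
  refine Integrable.mono' ((hcont.continuousOn.integrableOn_compact hΩ.isCompact_closure).mono_set
    subset_closure) ((hu.abs.measurable.pow_const _).mul hu.measurable).aestronglyMeasurable
    (ae_of_all _ fun x => ?_)
  rw [Real.norm_eq_abs, abs_mul, abs_of_nonneg (by positivity),
    ← Real.rpow_add_one' (abs_nonneg _) (by linarith)]
  exact le_of_eq (by ring_nf)

theorem exists_setIntegral_abs_rpow_sub_two_mul_self_eq_zero {E : Type*} [MetricSpace E]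
    [ProperSpace E] [MeasurableSpace E] [BorelSpace E] (μ : Measure E)
    [IsFiniteMeasureOnCompacts μ] {Ω : Set E} {u v : E → ℝ} {q : ℝ} (hq : 1 < q)
    (hΩ : Bornology.IsBounded Ω) (hu : Continuous u) (hv : Continuous v)
    (h : Disjoint (Function.support u) (Function.support v)) :
    ∃ α β : ℝ, (α ≠ 0 ∨ β ≠ 0) ∧
      ∫ x in Ω, |α * u x + β * v x| ^ (q - 2) * (α * u x + β * v x) ∂μ = 0 := by
  obtain ⟨α, β, hne, hzero⟩ := exists_abs_rpow_sub_two_mul_self_mul_add_eq_zero hq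
    (∫ x in Ω, |u x| ^ (q - 2) * u x ∂μ) (∫ x in Ω, |v x| ^ (q - 2) * v x ∂μ)
  have hsupp : Disjoint (Function.support fun x => α * u x) (Function.support fun x => β * v x) :=
    h.mono (Function.support_mul_subset_right _ _) (Function.support_mul_subset_right _ _)
  have hmul (a b : ℝ) : |a * b| ^ (q - 2) * (a * b) =
      |a| ^ (q - 2) * a * (|b| ^ (q - 2) * b) := by
    rw [abs_mul, Real.mul_rpow (abs_nonneg a) (abs_nonneg b), mul_mul_mul_comm]
  refine ⟨α, β, hne, ?_⟩
  simp only [map_add_of_disjoint_support (F := fun y : ℝ => |y| ^ (q - 2) * y) (by simp) hsupp]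
  rw [integral_add (integrableOn_abs_rpow_sub_two_mul_self hq hΩ (by fun_prop))
    (integrableOn_abs_rpow_sub_two_mul_self hq hΩ (by fun_prop))]
  simpa only [hmul, integral_const_mul] using hzero

variable {N : ℕ} {p q : ℝ} {Ω : Set (EuclideanSpace ℝ (Fin N))}
  {u v : EuclideanSpace ℝ (Fin N) → ℝ}

theorem muPQ_le_rayleighQuot {K : ℝ≥0} (hv : LipschitzOnWith K v (closure Ω))
    (hne : ∃ x ∈ Ω, v x ≠ 0) (hzero : ∫ x in Ω, |v x| ^ (q - 2) * v x = 0) :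
    muPQ p q Ω ≤ rayleighQuot p q Ω v := by
  refine csInf_le ⟨0, ?_⟩ ⟨v, K, hv, hne, hzero, rfl⟩
  rintro _ ⟨w, -, -, -, -, rfl⟩
  exact rayleighQuot_nonneg p q Ω w

theorem rayleighQuot_le_of_setLIntegral_le {Λ : ℝ≥0} {S : Set (EuclideanSpace ℝ (Fin N))}
    (hp : 0 < p) (hpq : p ≤ q) (hΩ : Bornology.IsBounded Ω) (hS : MeasurableSet S)
    (hv : Measurable v) (hsupp : Function.support v ⊆ S)
    (hle : ∫⁻ x in Ω, ‖fderiv ℝ v x‖ₑ ^ p ≤ Λ * ∫⁻ x in Ω, ‖v x‖ₑ ^ p) :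
    rayleighQuot p q Ω v ≤ Λ * (volume (Ω ∩ S)).toReal ^ (1 - p / q) := by
  have hq : 0 < q := hp.trans_le hpq
  have hexp : 0 ≤ 1 - p / q := sub_nonneg.2 (div_le_one_of_le₀ hpq hq.le)
  have hfin : volume (Ω ∩ S) ≠ ∞ := (hΩ.subset inter_subset_left).measure_lt_top.ne
  have hinter {s : ℝ} (hs : 0 < s) : ∫⁻ x in Ω, ‖v x‖ₑ ^ s = ∫⁻ x in Ω ∩ S, ‖v x‖ₑ ^ s :=
    setLIntegral_eq_setLIntegral_inter _ hS fun x hx => hsupp fun h0 => hx (by simp [h0, hs])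
  have hholder := lintegral_enorm_rpow_le_rpow_mul_measure_univ (μ := volume.restrict (Ω ∩ S))
    hp hpq hv.aestronglyMeasurable
  rw [Measure.restrict_apply_univ, ← hinter hp, ← hinter hq] at hholder
  have hC : (Λ : ℝ≥0∞) * volume (Ω ∩ S) ^ (1 - p / q) ≠ ∞ :=
    ENNReal.mul_ne_top ENNReal.coe_ne_top (ENNReal.rpow_ne_top_of_nonneg hexp hfin)
  refine (rayleighQuot_le_toReal hC hp.le hq.le hv ?_).trans_eq ?_
  · rw [mul_right_comm, mul_assoc]
    exact hle.trans (by gcongr)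
  · rw [ENNReal.toReal_mul, ENNReal.coe_toReal, ENNReal.toReal_rpow]

theorem muPQ_le_of_disjoint_tsupport {Λ K L : ℝ≥0} {S : Set (EuclideanSpace ℝ (Fin N))}
    (hp : 1 ≤ p) (hpq : p < q) (hΩ : Bornology.IsBounded Ω) (hS : MeasurableSet S)
    (hu : LipschitzWith K u) (hv : LipschitzWith L v) (hdisj : Disjoint (tsupport u) (tsupport v))
    (huS : Function.support u ⊆ S) (hvS : Function.support v ⊆ S)
    (hu0 : ∃ x ∈ Ω, u x ≠ 0) (hv0 : ∃ x ∈ Ω, v x ≠ 0)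
    (hule : ∫⁻ x in Ω, ‖fderiv ℝ u x‖ₑ ^ p ≤ Λ * ∫⁻ x in Ω, ‖u x‖ₑ ^ p)
    (hvle : ∫⁻ x in Ω, ‖fderiv ℝ v x‖ₑ ^ p ≤ Λ * ∫⁻ x in Ω, ‖v x‖ₑ ^ p) :
    muPQ p q Ω ≤ Λ * (volume (Ω ∩ S)).toReal ^ (1 - p / q) := by
  have hp0 : 0 < p := one_pos.trans_le hp
  have hsupp := hdisj.mono (subset_tsupport u) (subset_tsupport v)
  obtain ⟨α, β, hαβ, hzero⟩ := exists_setIntegral_abs_rpow_sub_two_mul_self_eq_zero volume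
    (hp.trans_lt hpq) hΩ hu.continuous hv.continuous hsupp
  have hlip : LipschitzWith (‖α‖₊ * K + ‖β‖₊ * L) fun x => α * u x + β * v x :=
    ((lipschitzWith_smul α).comp hu).add ((lipschitzWith_smul β).comp hv)
  have hne : ∃ x ∈ Ω, α * u x + β * v x ≠ 0 := by
    obtain ⟨x, hx, hux⟩ := hu0
    obtain ⟨y, hy, hvy⟩ := hv0
    rcases hαβ with hα | hβ
    · exact ⟨x, hx, by simp [Function.notMem_support.1 (hsupp.notMem_of_mem_left hux), hα, hux]⟩
    · exact ⟨y, hy, by simp [Function.notMem_support.1 (hsupp.notMem_of_mem_right hvy), hβ, hvy]⟩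
  have hsub : Function.support (fun x => α * u x + β * v x) ⊆ S := fun x hx => by
    contrapose! hx
    simp [Function.notMem_support.1 (notMem_subset huS hx),
      Function.notMem_support.1 (notMem_subset hvS hx)]
  refine (muPQ_le_rayleighQuot hlip.lipschitzOnWith hne hzero).trans
    (rayleighQuot_le_of_setLIntegral_le hp0 hpq.le hΩ hS hlip.continuous.measurable hsub ?_)
  exact lintegral_enorm_fderiv_add_rpow_le hp0 (hu.continuous.measurable.const_mul α)
    (hdisj.mono tsupport_mul_subset_right tsupport_mul_subset_right)
    (lintegral_enorm_fderiv_const_mul_rpow_le hp0.le α hule)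
    (lintegral_enorm_fderiv_const_mul_rpow_le hp0.le β hvle)

end Neumann

section TwoBalls

theorem exists_mem_dist_eq {X : Type*} [PseudoMetricSpace X] {Ω : Set X} {x₀ x₁ : X} {t : ℝ}
    (hΩ : IsPreconnected Ω) (hx₀ : x₀ ∈ closure Ω) (hx₁ : x₁ ∈ closure Ω) (ht0 : 0 < t)
    (ht1 : t < dist x₁ x₀) : ∃ y ∈ Ω, dist y x₀ = t := by
  have hcont : Continuous fun y => dist y x₀ := continuous_id.dist continuous_const
  obtain ⟨y, hyt, hy⟩ := mem_closure_iff.1 hx₀ _ (isOpen_lt hcont continuous_const)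
    (show dist x₀ x₀ < t by simpa)
  obtain ⟨z, hzt, hz⟩ := mem_closure_iff.1 hx₁ _ (isOpen_lt continuous_const hcont) ht1
  exact hΩ.intermediate_value hy hz hcont.continuousOn ⟨hyt.le, hzt.le⟩

variable {N : ℕ} {p q : ℝ} {Ω : Set (EuclideanSpace ℝ (Fin N))} {x₀ x₁ : EuclideanSpace ℝ (Fin N)}

theorem muPQ_le_of_isEnergyProfile [NeZero N] {Λ : ℝ≥0} {φ : ℝ → ℝ}
    (hφ : IsEnergyProfile (Module.finrank ℝ (EuclideanSpace ℝ (Fin N)) - 1) p Λ (dist x₀ x₁ / 2) φ)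
    (hp : 1 ≤ p) (hpq : p < q) (hΩo : IsOpen Ω) (hΩb : Bornology.IsBounded Ω) (hΩc : Convex ℝ Ω)
    (hx₀ : x₀ ∈ closure Ω) (hx₁ : x₁ ∈ closure Ω) :
    muPQ p q Ω ≤ Λ * (volume (Ω ∩ (closedBall x₀ (dist x₀ x₁ / 2) ∪
      closedBall x₁ (dist x₀ x₁ / 2)))).toReal ^ (1 - p / q) := by
  obtain ⟨R', hR', hsupp⟩ :=
    hφ.exists_tsupport_comp_norm_sub_subset (E := EuclideanSpace ℝ (Fin N))
  have hball (x : EuclideanSpace ℝ (Fin N)) :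
      Function.support (fun y => φ ‖y - x‖) ⊆ closedBall x (dist x₀ x₁ / 2) :=
    (subset_tsupport _).trans ((hsupp x).trans (closedBall_subset_closedBall hR'.le))
  have hne {x y : EuclideanSpace ℝ (Fin N)} (hx : x ∈ closure Ω) (hy : y ∈ closure Ω)
      (hxy : dist y x = dist x₀ x₁) : ∃ z ∈ Ω, φ ‖z - x‖ ≠ 0 := by
    obtain ⟨t, ht, hφt⟩ := hφ.exists_ne_zero
    obtain ⟨R'', hR'', hzero⟩ := hφ.exists_eq_zero
    have htR : t < R'' := lt_of_not_ge fun h => hφt (hzero t h)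
    obtain ⟨z, hz, rfl⟩ := exists_mem_dist_eq hΩc.isPreconnected hx hy ht (by linarith)
    exact ⟨z, hz, by rwa [← dist_eq_norm]⟩
  have henergy {x : EuclideanSpace ℝ (Fin N)} (hx : x ∈ closure Ω) :=
    hφ.setLIntegral_enorm_fderiv_le volume (zero_le_one.trans hp) hΩo hΩb fun y hy => by
      simpa only [hΩo.interior_eq] using
        hΩc.openSegment_closure_interior_subset_interior hx (hΩo.interior_eq.symm ▸ hy)
  obtain ⟨K, hK⟩ := hφ.exists_lipschitzWith_comp_norm_sub x₀
  obtain ⟨L, hL⟩ := hφ.exists_lipschitzWith_comp_norm_sub x₁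
  exact muPQ_le_of_disjoint_tsupport hp hpq hΩb
    (isClosed_closedBall.union isClosed_closedBall).measurableSet hK hL
    ((closedBall_disjoint_closedBall (by linarith)).mono (hsupp x₀) (hsupp x₁))
    ((hball x₀).trans subset_union_left) ((hball x₁).trans subset_union_right)
    (hne hx₀ hx₁ (dist_comm _ _)) (hne hx₁ hx₀ rfl) (henergy hx₀) (henergy hx₁)

theorem exists_isEnergyProfile_of_lambdaPQ_lt [NeZero N] {R : ℝ} {Λ : ℝ≥0} (hp : 0 < p)
    (hR : 0 < R) (hΛ : lambdaPQ p p (ball (0 : EuclideanSpace ℝ (Fin N)) R) < Λ) :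
    ∃ φ, IsEnergyProfile (Module.finrank ℝ (EuclideanSpace ℝ (Fin N)) - 1) p Λ R φ := by
  obtain ⟨w, hw, hlt⟩ :=
    exists_rayleighQuot_lt_of_lambdaPQ_lt isOpen_ball (nonempty_ball.2 hR) hΛ
  refine exists_isEnergyProfile_of_lintegral_lt volume hp (hw.contDiff.of_le (by simp))
    hw.hasCompactSupport hw.tsupport_subset ?_
  rwa [← ENNReal.div_lt_iff (.inl (hw.lintegral_enorm_rpow_ne_zero _ p))
    (.inl (hw.lintegral_enorm_rpow_ne_top _ hp)), ← hw.ofReal_rayleighQuot hp,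
    ENNReal.ofReal_lt_coe_iff (rayleighQuot_nonneg _ _ _ _)]

theorem muPQ_le_lambdaPQ_ball_mul [NeZero N] (hp : 1 ≤ p) (hpq : p < q) (hΩo : IsOpen Ω)
    (hΩb : Bornology.IsBounded Ω) (hΩc : Convex ℝ Ω) (hx₀ : x₀ ∈ closure Ω)
    (hx₁ : x₁ ∈ closure Ω) (hne : x₀ ≠ x₁) :
    muPQ p q Ω ≤ lambdaPQ p p (ball (0 : EuclideanSpace ℝ (Fin N)) (dist x₀ x₁ / 2)) *
      (volume (Ω ∩ (closedBall x₀ (dist x₀ x₁ / 2) ∪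
        closedBall x₁ (dist x₀ x₁ / 2)))).toReal ^ (1 - p / q) := by
  have hR : 0 < dist x₀ x₁ / 2 := half_pos (dist_pos.2 hne)
  set V := (volume (Ω ∩ (closedBall x₀ (dist x₀ x₁ / 2) ∪
    closedBall x₁ (dist x₀ x₁ / 2)))).toReal ^ (1 - p / q)
  set lam := lambdaPQ p p (ball (0 : EuclideanSpace ℝ (Fin N)) (dist x₀ x₁ / 2))
  have hlim : Filter.Tendsto (fun Λ => Λ * V) (𝓝[>] lam) (𝓝 (lam * V)) :=
    ((continuous_mul_const V).tendsto lam).mono_left nhdsWithin_le_nhds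
  refine ge_of_tendsto hlim (Filter.eventually_of_mem self_mem_nhdsWithin fun Λ hΛ => ?_)
  lift Λ to ℝ≥0 using
    (inv_nonneg.2 (by positivity)).trans ((inv_two_mul_rpow_le_lambdaPQ_ball hp hR).trans hΛ.le)
  obtain ⟨φ, hφ⟩ := exists_isEnergyProfile_of_lambdaPQ_lt (one_pos.trans_le hp) hR hΛ
  exact muPQ_le_of_isEnergyProfile hφ hp hpq hΩo hΩb hΩc hx₀ hx₁

end TwoBalls

section Geometry

variable {E : Type*} [NormedAddCommGroup E] [NormedSpace ℝ E]

theorem exists_mem_notMem_affineSpan_pair {U : Set E} (hE : 1 < Module.finrank ℝ E)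
    (hU : IsOpen U) (hne : U.Nonempty) (a b : E) : ∃ y ∈ U, y ∉ line[ℝ, a, b] := by
  by_contra! hsub
  have htop : line[ℝ, a, b] = ⊤ :=
    top_unique ((hU.affineSpan_eq_top hne).ge.trans (affineSpan_le.2 hsub))
  have hfinrank := (collinear_pair ℝ a b).finrank_le_one
  rw [← direction_affineSpan, htop, AffineSubspace.direction_top, finrank_top] at hfinrank
  exact hE.not_ge hfinrank

theorem eq_midpoint_of_mem_closedBall [StrictConvexSpace ℝ E] {x₀ x₁ z : E}
    (h₀ : z ∈ closedBall x₀ (dist x₀ x₁ / 2)) (h₁ : z ∈ closedBall x₁ (dist x₀ x₁ / 2)) :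
    z = midpoint ℝ x₀ x₁ := by
  rw [mem_closedBall] at h₀ h₁
  have htri := dist_triangle_left x₀ x₁ z
  exact eq_midpoint_of_dist_eq_half (by rw [dist_comm]; linarith) (by linarith)

-- The balls only meet at the midpoint, so a segment avoiding it cannot be covered.
theorem exists_mem_notMem_closedBall_union [StrictConvexSpace ℝ E] {Ω : Set E} {x₀ x₁ : E}
    (hE : 1 < Module.finrank ℝ E) (hΩo : IsOpen Ω) (hΩc : Convex ℝ Ω) (hx₀ : x₀ ∈ closure Ω)
    (hx₁ : x₁ ∈ closure Ω) (hne : x₀ ≠ x₁) :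
    ∃ y ∈ Ω, y ∉ closedBall x₀ (dist x₀ x₁ / 2) ∪ closedBall x₁ (dist x₀ x₁ / 2) := by
  set R := dist x₀ x₁ / 2
  have hR : 0 < R := half_pos (dist_pos.2 hne)
  obtain ⟨y₀, hy₀, hy₀R⟩ := mem_closure_iff.1 hx₀ _ isOpen_ball (mem_ball_self hR)
  obtain ⟨y₁, ⟨hy₁, hy₁R⟩, hline⟩ := exists_mem_notMem_affineSpan_pair hE (isOpen_ball.inter hΩo)
    (mem_closure_iff.1 hx₁ _ isOpen_ball (mem_ball_self hR)) y₀ (midpoint ℝ x₀ x₁)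
  by_contra! hcover
  obtain ⟨z, hz, hz₀, hz₁⟩ := isPreconnected_closed_iff.1 (convex_segment y₀ y₁).isPreconnected
    _ _ isClosed_closedBall isClosed_closedBall
    (fun z hz => hcover z (hΩc.segment_subset hy₀R hy₁R hz))
    ⟨y₀, left_mem_segment ℝ y₀ y₁, ball_subset_closedBall hy₀⟩
    ⟨y₁, right_mem_segment ℝ y₀ y₁, ball_subset_closedBall hy₁⟩
  obtain rfl := eq_midpoint_of_mem_closedBall hz₀ hz₁
  have hmid : y₀ ≠ midpoint ℝ x₀ x₁ := by
    rintro rfl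
    rw [mem_ball, dist_midpoint_left] at hy₀
    simp [R, div_eq_inv_mul] at hy₀
  exact hline ((mem_segment_iff_wbtw.1 hz).right_mem_affineSpan_of_left_ne hmid)

theorem exists_dist_eq_diam {X : Type*} [PseudoMetricSpace X] {K : Set X} (hK : IsCompact K)
    (hne : K.Nonempty) : ∃ x ∈ K, ∃ y ∈ K, dist x y = diam K := by
  obtain ⟨⟨x, y⟩, ⟨hx, hy⟩, hmax⟩ :=
    (hK.prod hK).exists_isMaxOn (hne.prod hne) continuous_dist.continuousOn
  exact ⟨x, hx, y, hy, (dist_le_diam_of_mem hK.isBounded hx hy).antisymm <|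
    diam_le_of_forall_dist_le dist_nonneg fun a ha b hb => hmax (mk_mem_prod ha hb)⟩

theorem measure_inter_lt_of_isClosed {X : Type*} [TopologicalSpace X] [MeasurableSpace X]
    [OpensMeasurableSpace X] {μ : Measure X} [μ.IsOpenPosMeasure] {Ω C : Set X} (hΩ : IsOpen Ω)
    (hC : IsClosed C) (hfin : μ Ω ≠ ∞) (h : ∃ y ∈ Ω, y ∉ C) : μ (Ω ∩ C) < μ Ω := by
  rw [← measure_inter_add_sdiff Ω hC.measurableSet] at hfin ⊢
  obtain ⟨y, hy, hyC⟩ := h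
  exact ENNReal.lt_add_right (ENNReal.add_ne_top.1 hfin).1
    ((hΩ.sdiff hC).measure_pos μ ⟨y, hy, hyC⟩).ne'

end Geometry

section DiameterBound

variable {N : ℕ} {p q : ℝ}

theorem muPQ_lt_lambdaPQ_ball_mul_volume (hN : 2 ≤ N) (hp : 1 ≤ p) (hpq : p < q)
    {Ω : Set (EuclideanSpace ℝ (Fin N))} {x₀ x₁ : EuclideanSpace ℝ (Fin N)} (hΩo : IsOpen Ω)
    (hΩb : Bornology.IsBounded Ω) (hΩc : Convex ℝ Ω) (hx₀ : x₀ ∈ closure Ω)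
    (hx₁ : x₁ ∈ closure Ω) (hne : x₀ ≠ x₁) :
    muPQ p q Ω < lambdaPQ p p (ball (0 : EuclideanSpace ℝ (Fin N)) (dist x₀ x₁ / 2)) *
      (volume Ω).toReal ^ (1 - p / q) := by
  have : NeZero N := ⟨by omega⟩
  have hR : 0 < dist x₀ x₁ / 2 := half_pos (dist_pos.2 hne)
  have hlam : 0 < lambdaPQ p p (ball (0 : EuclideanSpace ℝ (Fin N)) (dist x₀ x₁ / 2)) :=
    (by positivity : (0 : ℝ) < _).trans_le (inv_two_mul_rpow_le_lambdaPQ_ball hp hR)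
  have hexp : 0 < 1 - p / q := sub_pos.2 ((div_lt_one (by linarith)).2 hpq)
  have hvol : volume Ω ≠ ∞ := hΩb.measure_lt_top.ne
  have hlt := measure_inter_lt_of_isClosed (μ := volume) hΩo
    (isClosed_closedBall.union isClosed_closedBall) hvol
    (exists_mem_notMem_closedBall_union (by simpa) hΩo hΩc hx₀ hx₁ hne)
  refine (muPQ_le_lambdaPQ_ball_mul hp hpq hΩo hΩb hΩc hx₀ hx₁ hne).trans_lt ?_
  gcongr

theorem lambdaPQ_ball_eq_mul_diam_div_rpow [NeZero N] (hp : p ≠ 0)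
    (c c' : EuclideanSpace ℝ (Fin N)) {r d : ℝ} (hr : 0 < r) (hd : 0 < d) :
    lambdaPQ p p (ball c' (d / 2)) = lambdaPQ p p (ball c r) * (diam (ball c r) / d) ^ p := by
  have hscale := lambdaPQ_ball_mul_rpow hp hp c c' hr (half_pos hd)
  rw [div_self hp, mul_one, sub_add_cancel] at hscale
  rw [diam_ball_eq c hr.le, show 2 * r / d = r / (d / 2) by field_simp,
    Real.div_rpow hr.le (half_pos hd).le, mul_div_assoc', hscale,
    mul_div_cancel_right₀ _ (by positivity)]

theorem muPQ_lt_lambdaP_volume_diam_general (hN : 2 ≤ N) (hp : 1 ≤ p) (hpq : p < q)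
    {Ω : Set (EuclideanSpace ℝ (Fin N))} (hΩo : IsOpen Ω) (hΩb : Bornology.IsBounded Ω)
    (hΩc : Convex ℝ Ω) (hΩne : Ω.Nonempty) (c : EuclideanSpace ℝ (Fin N)) {r : ℝ} (hr : 0 < r) :
    muPQ p q Ω < lambdaPQ p p (ball c r) * (volume Ω).toReal ^ (1 - p / q) *
      (diam (ball c r) / diam Ω) ^ p := by
  have : NeZero N := ⟨by omega⟩
  obtain ⟨x₀, hx₀, x₁, hx₁, hdist⟩ := exists_dist_eq_diam hΩb.isCompact_closure hΩne.closure
  rw [diam_closure] at hdist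
  have hdiam : 0 < diam Ω := by
    obtain ⟨x, hx⟩ := hΩne
    exact diam_pos (infinite_of_mem_nhds x (hΩo.mem_nhds hx)).nontrivial hΩb
  calc muPQ p q Ω
      < lambdaPQ p p (ball (0 : EuclideanSpace ℝ (Fin N)) (dist x₀ x₁ / 2)) *
          (volume Ω).toReal ^ (1 - p / q) :=
        muPQ_lt_lambdaPQ_ball_mul_volume hN hp hpq hΩo hΩb hΩc hx₀ hx₁
          (dist_pos.1 (hdist ▸ hdiam))
    _ = lambdaPQ p p (ball c r) * (volume Ω).toReal ^ (1 - p / q) *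
          (diam (ball c r) / diam Ω) ^ p := by
        rw [hdist, lambdaPQ_ball_eq_mul_diam_div_rpow (by linarith) c 0 hr hdiam, mul_right_comm]

end DiameterBound

/-- Remark 4.5, estimate. Let `1 < p < q < p*`. For every open bounded
convex set `Ω ⊂ ℝ^N` and every open ball `B ⊂ ℝ^N`,
`μ_{p,q}(Ω) < λ_p(B) · |Ω|^(1 - p/q) · (diam B / diam Ω)^p`. -/
theorem muPQ_lt_lambdaP_volume_diam {N : ℕ} (hN : 2 ≤ N) (p q : ℝ) (hp : 1 < p)
    (hpq : p < q) (hq : ltCritical N p q)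
    (Ω : Set (EuclideanSpace ℝ (Fin N))) (hΩo : IsOpen Ω)
    (hΩb : Bornology.IsBounded Ω) (hΩc : Convex ℝ Ω) (hΩne : Ω.Nonempty)
    (c : EuclideanSpace ℝ (Fin N)) (r : ℝ) (hr : 0 < r) :
    muPQ p q Ω < lambdaPQ p p (ball c r) * (volume Ω).toReal ^ (1 - p / q) *
      (diam (ball c r) / diam Ω) ^ p :=
  muPQ_lt_lambdaP_volume_diam_general hN hp.le hpq hΩo hΩb hΩc hΩne c hr
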